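/- Let n ≥ 3 and 1 ≤ m < n−1. In the even hyperoctahedral group D_n, let S = {1, 2, …, n−1, −n}, let W_P = {w ∈ D_n : w(S) = S} and W_Q = {w ∈ D_n : w({1,…,m}) = {1,…,m}}. Then two elements w, w' ∈ D_n lie in the same (W_P, W_Q) double coset if and only if #(w({1,…,m}) ∩ S) = #(w'({1,…,m}) ∩ S); consequently the (W_P, W_Q) double cosets are exactly the m+1 sets E_d = {w ∈ D_n : #(w({1,…,m}) ∩ S) = d} for 0 ≤ d ≤ m. -/

import Mathlib

/-- The set `{−n, …, −1, 1, …, n}` of signed indices. -/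
def SIdx (n : ℕ) : Type := {x : ℤ // x ≠ 0 ∧ x.natAbs ≤ n}

instance (n : ℕ) : Neg (SIdx n) :=
  ⟨fun x => ⟨-x.1, ⟨neg_ne_zero.mpr x.2.1, by simpa using x.2.2⟩⟩⟩

/-- Membership in the hyperoctahedral group `B_n`: a permutation `w` of
`{−n, …, −1, 1, …, n}` satisfying `w(−x) = −w(x)` for all `x`. -/
def IsSignedPerm {n : ℕ} (w : Equiv.Perm (SIdx n)) : Prop :=
  ∀ x : SIdx n, w (-x) = -(w x)

/-- Membership in the even hyperoctahedral group `D_n ⊆ B_n`: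
the number of `j ∈ {1,…,n}` with `w(j) < 0` is even. -/
noncomputable def IsEvenSignedPerm {n : ℕ} (w : Equiv.Perm (SIdx n)) : Prop :=
  IsSignedPerm w ∧ Even (Set.ncard {x : SIdx n | 0 < x.1 ∧ (w x).1 < 0})

/-- The set `S = {1, 2, …, n−1, −n}`. -/
def IndexSetS (n : ℕ) : Set (SIdx n) :=
  {x : SIdx n | (0 < x.1 ∧ x.1 < (n : ℤ)) ∨ x.1 = -(n : ℤ)}

/-- `W_P = {w ∈ D_n : w(S) = S}`. -/
noncomputable def InWP {n : ℕ} (h : Equiv.Perm (SIdx n)) : Prop :=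
  IsEvenSignedPerm h ∧ ⇑h '' IndexSetS n = IndexSetS n

/-- `W_Q = {w ∈ D_n : w({1,…,m}) = {1,…,m}}`. -/
noncomputable def InWQ {n : ℕ} (m : ℕ) (k : Equiv.Perm (SIdx n)) : Prop :=
  IsEvenSignedPerm k ∧
    ⇑k '' {x : SIdx n | 0 < x.1 ∧ x.1 ≤ (m : ℤ)} = {x : SIdx n | 0 < x.1 ∧ x.1 ≤ (m : ℤ)}

/-- `w` and `w'` lie in the same `(W_P, W_Q)` double coset. -/
noncomputable def SameDC {n : ℕ} (m : ℕ) (w w' : Equiv.Perm (SIdx n)) : Prop :=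
  ∃ h k : Equiv.Perm (SIdx n), InWP h ∧ InWQ m k ∧ w' = h * w * k

/-- `#(w({1,…,m}) ∩ S)`. -/
noncomputable def interCount {n : ℕ} (m : ℕ) (w : Equiv.Perm (SIdx n)) : ℕ :=
  Set.ncard ((⇑w '' {x : SIdx n | 0 < x.1 ∧ x.1 ≤ (m : ℤ)}) ∩ IndexSetS n)

/-!
An odd permutation `w` of a set with a fixed-point-free involution `x ↦ -x` is even when it moves
an even number of elements out of a system `P` of representatives modulo sign. For three such
systems, `#(A \ B) + #(B \ C) = #(A \ C) + 2 #((B \ A) \ C)`, so this parity is multiplicative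
in `w`, and an odd permutation that preserves a *single* system `S` is automatically even. Hence
`W_P` is the group of all permutations of `S`, extended oddly. A set `A` disjoint from `-A` amounts
to two disjoint subsets of `S`, namely `A ∩ S` and `-A ∩ S`, and these can be moved onto those of
`A'` as soon as the cardinalities agree.
-/

open Equiv MulAction
open scoped Pointwise

section Combinatorics

theorem mem_doubleCoset_inf_stabilizer_iff {G X : Type*} [Group G] [MulAction G X]
    {D H : Subgroup G} (hHD : H ≤ D) {w w' : G} (hw : w ∈ D) (hw' : w' ∈ D) (x : X) :
    w' ∈ DoubleCoset.doubleCoset w H (D ⊓ stabilizer G x : Subgroup G) ↔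
      ∃ h ∈ H, h • w • x = w' • x := by
  simp only [DoubleCoset.mem_doubleCoset, SetLike.mem_coe, Subgroup.mem_inf, mem_stabilizer_iff]
  constructor
  · rintro ⟨h, hh, k, ⟨-, hk⟩, rfl⟩
    exact ⟨h, hh, by rw [mul_smul, mul_smul, hk]⟩
  · rintro ⟨h, hh, hx⟩
    refine ⟨h, hh, w⁻¹ * h⁻¹ * w',
      ⟨D.mul_mem (D.mul_mem (D.inv_mem hw) (D.inv_mem (hHD hh))) hw', ?_⟩, by group⟩
    rw [mul_smul, ← hx, mul_smul, inv_smul_smul, inv_smul_smul]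

variable {α : Type*} [Finite α]

theorem smul_set_eq_of_forall_mem_of_ncard_le {G : Type*} [Group G] [MulAction G α] {g : G}
    {A B : Set α} (hg : ∀ x ∈ A, g • x ∈ B) (hcard : B.ncard ≤ A.ncard) : g • A = B :=
  Set.eq_of_subset_of_ncard_le (Set.smul_set_subset_iff.2 hg) (by rwa [Set.ncard_smul_set])

theorem exists_perm_smul_eq_and_smul_eq {A B A' B' : Set α} (hAB : Disjoint A B)
    (hAB' : Disjoint A' B') (hA : A.ncard = A'.ncard) (hB : B.ncard = B'.ncard) :
    ∃ σ : Perm α, σ • A = A' ∧ σ • B = B' := by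
  classical
  have := Fintype.ofFinite α
  obtain ⟨eA⟩ : Nonempty (A ≃ A') := Finite.card_eq.1 hA
  obtain ⟨eB⟩ : Nonempty (B ≃ B') := Finite.card_eq.1 hB
  let e : ↥(A ∪ B) ≃ ↥(A' ∪ B') :=
    (Equiv.Set.union hAB).trans ((eA.sumCongr eB).trans (Equiv.Set.union hAB').symm)
  refine ⟨e.extendSubtype, smul_set_eq_of_forall_mem_of_ncard_le (fun x hx ↦ ?_) hA.ge,
    smul_set_eq_of_forall_mem_of_ncard_le (fun x hx ↦ ?_) hB.ge⟩
  · rw [Perm.smul_def, e.extendSubtype_apply_of_mem x (Or.inl hx)]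
    simp [e, Equiv.Set.union_apply_left hAB (a := ⟨x, Or.inl hx⟩) hx]
  · rw [Perm.smul_def, e.extendSubtype_apply_of_mem x (Or.inr hx)]
    simp [e, Equiv.Set.union_apply_right hAB (a := ⟨x, Or.inr hx⟩) hx]

theorem exists_subset_inter_eq_even_ncard {F M P : Set α} (hFM : F ⊆ M) (hMP : M ⊂ P) :
    ∃ E ⊆ P, E ∩ M = F ∧ Even E.ncard := by
  obtain ⟨a, haP, haM⟩ := Set.exists_of_ssubset hMP
  rcases Nat.even_or_odd F.ncard with hF | hF
  · exact ⟨F, hFM.trans hMP.subset, Set.inter_eq_left.2 hFM, hF⟩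
  · refine ⟨insert a F, Set.insert_subset haP (hFM.trans hMP.subset), ?_, ?_⟩
    · rw [Set.insert_inter_of_notMem haM, Set.inter_eq_left.2 hFM]
    · rw [Set.ncard_insert_of_notMem fun haF ↦ haM (hFM haF)]
      exact hF.add_one

end Combinatorics

section HalfSystem

variable {α : Type*} [InvolutiveNeg α] {A B C : Set α}

/-- A half-system: a set containing exactly one of `x` and `-x` for every `x`, such as the set of
positive indices or the set `S` of the theorem. -/
def IsHalfSystem (A : Set α) : Prop := -A = Aᶜ

namespace IsHalfSystem

theorem neg_mem_iff (hA : IsHalfSystem A) {x : α} : -x ∈ A ↔ x ∉ A := by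
  rw [← Set.mem_neg, hA, Set.mem_compl_iff]

theorem neg_sdiff (hA : IsHalfSystem A) (hB : IsHalfSystem B) : -(A \ B) = B \ A := by
  ext x
  simp only [Set.mem_neg, Set.mem_sdiff, hA.neg_mem_iff, hB.neg_mem_iff, not_not, and_comm]

theorem ncard_sdiff_comm (hA : IsHalfSystem A) (hB : IsHalfSystem B) :
    (A \ B).ncard = (B \ A).ncard := by
  rw [← hA.neg_sdiff hB, Set.ncard_neg]

theorem ncard_inter_add_ncard_neg_inter [Finite α] (hA : IsHalfSystem A) (B : Set α) :
    (B ∩ A).ncard + (-B ∩ A).ncard = B.ncard := by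
  rw [← Set.ncard_neg (-B ∩ A), Set.inter_neg, neg_neg, hA, ← Set.sdiff_eq,
    Set.ncard_inter_add_ncard_sdiff_eq_ncard]

theorem disjoint_neg_of_subset (hA : IsHalfSystem A) (hBA : B ⊆ A) : Disjoint B (-B) :=
  disjoint_compl_right.mono hBA (hA ▸ Set.neg_subset_neg.2 hBA)

theorem ncard_sdiff_add_ncard_sdiff [Finite α] (hA : IsHalfSystem A) (hB : IsHalfSystem B)
    (hC : IsHalfSystem C) :
    (A \ B).ncard + (B \ C).ncard = (A \ C).ncard + 2 * ((B \ A) \ C).ncard := by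
  have hAB := Set.ncard_inter_add_ncard_sdiff_eq_ncard (A \ B) C
  have hBC := Set.ncard_inter_add_ncard_sdiff_eq_ncard (B \ C) A
  have hAC := Set.ncard_inter_add_ncard_sdiff_eq_ncard (A \ C) B
  have hneg : -((A \ B) ∩ C) = (B \ A) \ C := by
    ext x
    simp only [Set.mem_neg, Set.mem_inter_iff, Set.mem_sdiff, hA.neg_mem_iff, hB.neg_mem_iff,
      hC.neg_mem_iff]
    tauto
  have hcard : ((A \ B) ∩ C).ncard = ((B \ A) \ C).ncard := by rw [← hneg, Set.ncard_neg]
  have hinter : (A \ C) ∩ B = (B \ C) ∩ A := by grind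
  rw [hinter, Set.sdiff_sdiff_comm] at hAC
  rw [Set.sdiff_sdiff_comm] at hBC
  omega

theorem even_ncard_sdiff_trans [Finite α] (hA : IsHalfSystem A) (hB : IsHalfSystem B)
    (hC : IsHalfSystem C) (hAB : Even (A \ B).ncard) (hBC : Even (B \ C).ncard) :
    Even (A \ C).ncard := by
  have h := hAB.add hBC
  rw [hA.ncard_sdiff_add_ncard_sdiff hB hC] at h
  exact (Nat.even_add.1 h).2 (even_two_mul _)

end IsHalfSystem

end HalfSystem

section SignedPerms

variable {α : Type*} [InvolutiveNeg α] {P S A M : Set α} {w : Perm α}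

variable (α) in
/-- The group of permutations commuting with negation (the hyperoctahedral group),
encoded as the centralizer of `x ↦ -x`. -/
def signedPerms : Subgroup (Perm α) := Subgroup.centralizer {Equiv.neg α}

theorem mem_signedPerms : w ∈ signedPerms α ↔ Function.Odd w := by
  simp only [signedPerms, Subgroup.mem_centralizer_singleton_iff, Equiv.ext_iff, Perm.mul_apply,
    Equiv.neg_apply, Function.Odd]

theorem smul_set_neg_of_mem_signedPerms (hw : w ∈ signedPerms α) (A : Set α) :
    w • (-A) = -(w • A) := by
  have hw' := mem_signedPerms.1 (inv_mem hw)
  ext x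
  simp only [Set.mem_neg, Set.mem_smul_set_iff_inv_smul_mem, Perm.smul_def, hw' x]

theorem IsHalfSystem.smul (hA : IsHalfSystem A) (hw : w ∈ signedPerms α) :
    IsHalfSystem (w • A) := by
  rw [IsHalfSystem, ← smul_set_neg_of_mem_signedPerms hw, hA, Set.smul_set_compl]

theorem disjoint_neg_smul_set (hA : Disjoint A (-A)) (hw : w ∈ signedPerms α) :
    Disjoint (w • A) (-(w • A)) := by
  rwa [← smul_set_neg_of_mem_signedPerms hw, Set.disjoint_smul_set]

theorem IsHalfSystem.exists_mem_signedPerms_extending (hS : IsHalfSystem S) (σ : Perm S) :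
    ∃ h ∈ signedPerms α, ∀ x : S, h x = σ x := by
  classical
  let τ : Perm α := σ.ofSubtype
  have hτ {x : α} (hx : x ∉ S) : τ x = x := Perm.ofSubtype_apply_of_not_mem σ hx
  have hτ_mem {x : α} (hx : x ∈ S) : τ x ∈ S := (Perm.ofSubtype_apply_mem_iff_mem σ x).2 hx
  let h : Perm α := τ * (Equiv.neg α * τ * Equiv.neg α)
  have hh (x : α) : h x = τ (-τ (-x)) := rfl
  have h_mem {x : α} (hx : x ∈ S) : h x = τ x := by
    rw [hh, hτ (mt hS.neg_mem_iff.1 (not_not.2 hx)), neg_neg]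
  have h_neg {x : α} (hx : x ∈ S) : h (-x) = -τ x := by
    rw [hh, neg_neg, hτ (mt hS.neg_mem_iff.1 (not_not.2 (hτ_mem hx)))]
  refine ⟨h, mem_signedPerms.2 fun x ↦ ?_, fun x ↦ by
    rw [h_mem x.2, Perm.ofSubtype_apply_coe]⟩
  by_cases hx : x ∈ S
  · rw [h_mem hx, h_neg hx]
  · have hx' := hS.neg_mem_iff.2 hx
    rw [h_mem hx', ← neg_neg x, h_neg hx', neg_neg, neg_neg]

open Classical in
/-- The signed permutation negating the elements of `F ∪ -F` and fixing all others, used to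
construct an element of every double coset. -/
noncomputable def signFlip (F : Set α) : Perm α :=
  Function.Involutive.toPerm (fun x ↦ if x ∈ F ∨ -x ∈ F then -x else x) fun x ↦ by
    by_cases hx : x ∈ F ∨ -x ∈ F
    · simp [hx, hx.symm]
    · simp [hx]

theorem signFlip_of_mem {F : Set α} {x : α} (hx : x ∈ F ∨ -x ∈ F) : signFlip F x = -x :=
  if_pos hx

theorem signFlip_of_notMem {F : Set α} {x : α} (hx : ¬(x ∈ F ∨ -x ∈ F)) : signFlip F x = x :=
  if_neg hx

theorem signFlip_mem_signedPerms (F : Set α) : signFlip F ∈ signedPerms α := by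
  refine mem_signedPerms.2 fun x ↦ ?_
  by_cases hx : x ∈ F ∨ -x ∈ F
  · rw [signFlip_of_mem hx, signFlip_of_mem (by rwa [neg_neg, or_comm])]
  · rw [signFlip_of_notMem hx, signFlip_of_notMem (by rwa [neg_neg, or_comm])]

theorem IsHalfSystem.signFlip_apply_mem_iff (hP : IsHalfSystem P) {F : Set α} (hF : F ⊆ P)
    {x : α} (hx : x ∈ P) (hS : IsHalfSystem S) :
    signFlip F x ∈ S ↔ (x ∈ F ↔ x ∉ S) := by
  have hnx : -x ∉ F := fun h ↦ hP.neg_mem_iff.1 (hF h) hx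
  by_cases hxF : x ∈ F
  · simp only [signFlip_of_mem (Or.inl hxF), hS.neg_mem_iff, hxF, true_iff]
  · simp only [signFlip_of_notMem (not_or.2 ⟨hxF, hnx⟩), hxF, false_iff, not_not]

theorem IsHalfSystem.signFlip_smul_sdiff (hP : IsHalfSystem P) {F : Set α} (hF : F ⊆ P) :
    signFlip F • P \ P = -F := by
  ext y
  obtain ⟨x, rfl⟩ := (signFlip F).surjective y
  rw [Set.mem_sdiff, ← Perm.smul_def, Set.smul_mem_smul_set_iff, Perm.smul_def, Set.mem_neg]
  by_cases hx : x ∈ F ∨ -x ∈ F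
  · rw [signFlip_of_mem hx, neg_neg, hP.neg_mem_iff, not_not, and_self]
    exact ⟨fun hxP ↦ hx.resolve_right fun hnx ↦ hP.neg_mem_iff.1 (hF hnx) hxP, @hF x⟩
  · rw [signFlip_of_notMem hx]
    tauto

variable [Finite α]

/-- The signed permutations taking an even number of elements of the half-system `P` outside `P`
(the even hyperoctahedral group, for `P` the set of positive indices). -/
def evenSignedPerms (hP : IsHalfSystem P) : Subgroup (Perm α) where
  carrier := {w | w ∈ signedPerms α ∧ Even (w • P \ P).ncard}
  one_mem' := ⟨one_mem _, by simp⟩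
  mul_mem' := by
    rintro v w ⟨hv, hv_even⟩ ⟨hw, hw_even⟩
    refine ⟨mul_mem hv hw, ?_⟩
    refine (hP.smul (mul_mem hv hw)).even_ncard_sdiff_trans (hP.smul hv) hP ?_ hv_even
    rwa [mul_smul, ← Set.smul_set_sdiff, Set.ncard_smul_set]
  inv_mem' := by
    rintro w ⟨hw, hw_even⟩
    refine ⟨inv_mem hw, ?_⟩
    rwa [← Set.ncard_smul_set w, Set.smul_set_sdiff, smul_inv_smul,
      hP.ncard_sdiff_comm (hP.smul hw)]

theorem mem_evenSignedPerms {hP : IsHalfSystem P} :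
    w ∈ evenSignedPerms hP ↔ w ∈ signedPerms α ∧ Even (w • P \ P).ncard := Iff.rfl

theorem mem_evenSignedPerms_of_smul_eq (hP : IsHalfSystem P) (hS : IsHalfSystem S)
    (hw : w ∈ signedPerms α) (hwS : w • S = S) : w ∈ evenSignedPerms hP := by
  have h := (hP.smul hw).ncard_sdiff_add_ncard_sdiff hS hP
  have hcard : (w • P \ S).ncard = (S \ P).ncard := by
    rw [← hwS, ← Set.smul_set_sdiff, Set.ncard_smul_set, hwS, hP.ncard_sdiff_comm hS]
  refine ⟨hw, ?_⟩
  rw [Nat.even_iff]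
  omega

theorem exists_mem_evenSignedPerms_smul_eq (hP : IsHalfSystem P) (hS : IsHalfSystem S)
    {A' : Set α} (hA : Disjoint A (-A)) (hA' : Disjoint A' (-A')) (hcard : A.ncard = A'.ncard)
    (hinter : (A ∩ S).ncard = (A' ∩ S).ncard) :
    ∃ h ∈ evenSignedPerms hP ⊓ stabilizer (Perm α) S, h • A = A' := by
  have hneg := hS.ncard_inter_add_ncard_neg_inter A
  have hneg' := hS.ncard_inter_add_ncard_neg_inter A'
  have ncard_coe (B : Set α) : ((↑) ⁻¹' B : Set S).ncard = (B ∩ S).ncard := Set.ncard_subtype _ B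
  obtain ⟨σ, hσ, hσ_neg⟩ := exists_perm_smul_eq_and_smul_eq
    (hA.preimage ((↑) : S → α)) (hA'.preimage ((↑) : S → α))
    (by rw [ncard_coe, ncard_coe, hinter]) (by rw [ncard_coe, ncard_coe]; omega)
  have hσ_mem (x : S) (hx : (x : α) ∈ A) : (σ x : α) ∈ A' :=
    hσ.subset (Set.smul_mem_smul_set hx)
  have hσ_neg_mem (x : S) (hx : (x : α) ∈ -A) : (σ x : α) ∈ -A' :=
    hσ_neg.subset (Set.smul_mem_smul_set hx)
  obtain ⟨h, hh, hσh⟩ := hS.exists_mem_signedPerms_extending σ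
  have hhS : h • S = S := smul_set_eq_of_forall_mem_of_ncard_le
    (fun x hx ↦ by rw [Perm.smul_def, hσh ⟨x, hx⟩]; exact (σ _).2) le_rfl
  refine ⟨h, ⟨mem_evenSignedPerms_of_smul_eq hP hS hh hhS, hhS⟩,
    smul_set_eq_of_forall_mem_of_ncard_le (fun x hx ↦ ?_) hcard.ge⟩
  rw [Perm.smul_def]
  by_cases hxS : x ∈ S
  · rw [hσh ⟨x, hxS⟩]
    exact hσ_mem ⟨x, hxS⟩ hx
  · have hxS' := hS.neg_mem_iff.2 hxS
    rw [← neg_neg x, mem_signedPerms.1 hh, hσh ⟨-x, hxS'⟩, ← Set.mem_neg]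
    exact hσ_neg_mem ⟨-x, hxS'⟩ (by rwa [Set.neg_mem_neg])

theorem exists_smul_eq_iff_ncard_inter_eq (hP : IsHalfSystem P) (hS : IsHalfSystem S)
    {A' : Set α} (hA : Disjoint A (-A)) (hA' : Disjoint A' (-A')) (hcard : A.ncard = A'.ncard) :
    (∃ h ∈ evenSignedPerms hP ⊓ stabilizer (Perm α) S, h • A = A') ↔
      (A ∩ S).ncard = (A' ∩ S).ncard := by
  refine ⟨?_, exists_mem_evenSignedPerms_smul_eq hP hS hA hA' hcard⟩
  rintro ⟨h, ⟨-, hhS⟩, rfl⟩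
  rw [← Set.ncard_smul_set h, Set.smul_set_inter, mem_stabilizer_iff.1 hhS]

theorem mem_doubleCoset_iff_ncard_smul_inter_eq (hP : IsHalfSystem P) (hS : IsHalfSystem S)
    (hM : Disjoint M (-M)) {w' : Perm α} (hw : w ∈ evenSignedPerms hP)
    (hw' : w' ∈ evenSignedPerms hP) :
    w' ∈ DoubleCoset.doubleCoset w
        (evenSignedPerms hP ⊓ stabilizer (Perm α) S : Subgroup (Perm α))
        (evenSignedPerms hP ⊓ stabilizer (Perm α) M : Subgroup (Perm α)) ↔
      (w • M ∩ S).ncard = (w' • M ∩ S).ncard := by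
  rw [mem_doubleCoset_inf_stabilizer_iff inf_le_left hw hw']
  exact exists_smul_eq_iff_ncard_inter_eq hP hS (disjoint_neg_smul_set hM hw.1)
    (disjoint_neg_smul_set hM hw'.1) (by rw [Set.ncard_smul_set, Set.ncard_smul_set])

theorem exists_mem_evenSignedPerms_ncard_smul_inter_eq (hP : IsHalfSystem P)
    (hS : IsHalfSystem S) (hMP : M ⊂ P) {d : ℕ} (hd : d ≤ M.ncard) :
    ∃ w ∈ evenSignedPerms hP, (w • M ∩ S).ncard = d := by
  obtain ⟨T, hTM, rfl⟩ := Set.exists_subset_card_eq hd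
  -- On `M`, flipping exactly where `T` and `S` disagree sends `T` into `S` and `M \ T` outside.
  obtain ⟨F, hFP, hFM, hF⟩ :=
    exists_subset_inter_eq_even_ncard (Set.inter_subset_left (s := M) (t := symmDiff T S)) hMP
  refine ⟨signFlip F, ⟨signFlip_mem_signedPerms F, ?_⟩, ?_⟩
  · rwa [hP.signFlip_smul_sdiff hFP, Set.ncard_neg]
  · suffices signFlip F • M ∩ S = signFlip F • T by rw [this, Set.ncard_smul_set]
    have flip_mem_iff {x : α} (hx : x ∈ M) : signFlip F x ∈ S ↔ x ∈ T := by
      have hxF : x ∈ F ↔ x ∈ symmDiff T S := by simpa [hx] using Set.ext_iff.1 hFM x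
      rw [hP.signFlip_apply_mem_iff hFP (hMP.subset hx) hS, hxF, Set.mem_symmDiff]
      tauto
    ext y
    obtain ⟨x, rfl⟩ := (signFlip F).surjective y
    simp only [Set.mem_inter_iff, ← Perm.smul_def, Set.smul_mem_smul_set_iff]
    exact ⟨fun h ↦ (flip_mem_iff h.1).1 h.2, fun h ↦ ⟨hTM h, (flip_mem_iff (hTM h)).2 h⟩⟩

theorem stmt_12_general (hP : IsHalfSystem P) (hS : IsHalfSystem S) (hMP : M ⊂ P) :
    (∀ w w' : Perm α, w ∈ evenSignedPerms hP → w' ∈ evenSignedPerms hP →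
      (w' ∈ DoubleCoset.doubleCoset w
          (evenSignedPerms hP ⊓ stabilizer (Perm α) S : Subgroup (Perm α))
          (evenSignedPerms hP ⊓ stabilizer (Perm α) M : Subgroup (Perm α)) ↔
        (w • M ∩ S).ncard = (w' • M ∩ S).ncard)) ∧
    (∀ d : ℕ, d ≤ M.ncard → ∃ w : Perm α,
      w ∈ evenSignedPerms hP ∧ (w • M ∩ S).ncard = d) :=
  ⟨fun _ _ ↦ mem_doubleCoset_iff_ncard_smul_inter_eq hP hS (hP.disjoint_neg_of_subset hMP.subset),
    fun _ ↦ exists_mem_evenSignedPerms_ncard_smul_inter_eq hP hS hMP⟩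

end SignedPerms

section SIdx

variable {n m : ℕ}

instance : Finite (SIdx n) :=
  ((Set.finite_Icc (-n : ℤ) n).subset fun x hx ↦ by
    rw [Set.mem_Icc, ← abs_le, Int.abs_eq_natAbs]
    exact_mod_cast hx.2).to_subtype

instance : InvolutiveNeg (SIdx n) where
  neg_neg x := Subtype.ext (neg_neg x.1)

theorem SIdx.val_neg (x : SIdx n) : (-x).1 = -x.1 := rfl

theorem isHalfSystem_pos (n : ℕ) : IsHalfSystem {x : SIdx n | 0 < x.1} := by
  ext x
  have hx := x.2.1
  simp only [Set.mem_neg, Set.mem_compl_iff, Set.mem_ofPred_eq, SIdx.val_neg]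
  omega

theorem isHalfSystem_indexSetS (n : ℕ) : IsHalfSystem (IndexSetS n) := by
  ext x
  have hx := x.2
  simp only [IndexSetS, Set.mem_neg, Set.mem_compl_iff, Set.mem_ofPred_eq, SIdx.val_neg]
  omega

theorem isEvenSignedPerm_iff {w : Perm (SIdx n)} :
    IsEvenSignedPerm w ↔ w ∈ evenSignedPerms (isHalfSystem_pos n) := by
  rw [IsEvenSignedPerm, mem_evenSignedPerms, mem_signedPerms, ← Set.ncard_smul_set w]
  suffices h : w • {x | 0 < x.1 ∧ (w x).1 < 0} = w • {x | 0 < x.1} \ {x | 0 < x.1} by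
    rw [h]; rfl
  ext y
  obtain ⟨x, rfl⟩ := w.surjective y
  have hwx := (w x).2.1
  simp only [← Perm.smul_def, Set.smul_mem_smul_set_iff, Set.mem_sdiff, Set.mem_ofPred_eq] at hwx ⊢
  omega

theorem sameDC_iff {w w' : Perm (SIdx n)} :
    SameDC m w w' ↔ w' ∈ DoubleCoset.doubleCoset w
      (evenSignedPerms (isHalfSystem_pos n) ⊓ stabilizer (Perm (SIdx n)) (IndexSetS n) :
        Subgroup (Perm (SIdx n)))
      (evenSignedPerms (isHalfSystem_pos n) ⊓
        stabilizer (Perm (SIdx n)) {x : SIdx n | 0 < x.1 ∧ x.1 ≤ (m : ℤ)} :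
        Subgroup (Perm (SIdx n))) := by
  simp only [SameDC, InWP, InWQ, isEvenSignedPerm_iff, DoubleCoset.mem_doubleCoset,
    SetLike.mem_coe, Subgroup.mem_inf, mem_stabilizer_iff, exists_and_left]
  rfl

theorem interCount_eq_ncard_smul_inter (m : ℕ) (w : Perm (SIdx n)) :
    interCount m w = (w • {x : SIdx n | 0 < x.1 ∧ x.1 ≤ (m : ℤ)} ∩ IndexSetS n).ncard := rfl

theorem ncard_setOf_pos_le (hmn : m ≤ n) :
    {x : SIdx n | 0 < x.1 ∧ x.1 ≤ (m : ℤ)}.ncard = m := by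
  have hinj : Function.Injective (fun x : SIdx n ↦ x.1) := Subtype.val_injective
  have himage : (fun x : SIdx n ↦ x.1) '' {x : SIdx n | 0 < x.1 ∧ x.1 ≤ (m : ℤ)} =
      (Finset.Ioc (0 : ℤ) m : Set ℤ) := by
    ext z
    simp only [Set.mem_image, Set.mem_ofPred_eq, Finset.coe_Ioc, Set.mem_Ioc]
    exact ⟨by rintro ⟨y, hy, rfl⟩; exact hy, fun hz ↦ ⟨⟨z, by omega, by omega⟩, hz, rfl⟩⟩
  rw [← Set.ncard_image_of_injective _ hinj, himage, Set.ncard_coe_finset,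
    Int.card_Ioc, sub_zero, Int.toNat_natCast]

theorem setOf_pos_le_ssubset (hmn : m < n) :
    {x : SIdx n | 0 < x.1 ∧ x.1 ≤ (m : ℤ)} ⊂ {x : SIdx n | 0 < x.1} := by
  refine ⟨fun x hx ↦ hx.1, fun h ↦ ?_⟩
  have hn : (⟨n, by omega, by simp⟩ : SIdx n) ∈ {x : SIdx n | 0 < x.1 ∧ x.1 ≤ (m : ℤ)} :=
    h (Int.natCast_pos.2 (Nat.zero_lt_of_lt hmn))
  exact absurd (Int.ofNat_le.1 hn.2) hmn.not_ge

end SIdx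

/-- For `n ≥ 3` and `1 ≤ m < n−1`, two elements of `D_n` lie in the same `(W_P, W_Q)`
double coset iff `#(w({1,…,m}) ∩ S)` agree; the double cosets are exactly the `m+1`
sets `E_d`, `0 ≤ d ≤ m` (each of which is nonempty). -/
theorem stmt_12 (n m : ℕ) (hn : 3 ≤ n) (hm1 : 1 ≤ m) (hmn : m < n - 1) :
    (∀ w w' : Equiv.Perm (SIdx n), IsEvenSignedPerm w → IsEvenSignedPerm w' →
      (SameDC m w w' ↔ interCount m w = interCount m w')) ∧
    (∀ d : ℕ, d ≤ m → ∃ w : Equiv.Perm (SIdx n),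
      IsEvenSignedPerm w ∧ interCount m w = d) := by
  simpa only [isEvenSignedPerm_iff, sameDC_iff, interCount_eq_ncard_smul_inter,
    ncard_setOf_pos_le (by omega : m ≤ n)] using
    stmt_12_general (isHalfSystem_pos n) (isHalfSystem_indexSetS n)
      (setOf_pos_le_ssubset (by omega : m < n))
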